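/- For every j ∈ {1, …, m} the following two conditions are equivalent: (1) for every σ ∈ Σ_{ρ,α} and every t ∈ [0, 1], the probability measure (1 − t)σ + t δ_{p_j} belongs to Σ_{ρ,α}; (2) for every k ∈ ℕ and every subset ι ⊆ {1, …, m} with k + card(ι) ≥ 1 and 4π (k + Σ_{i ∈ ι} (1 + α_i)) < ρ, one also has 4π (k + Σ_{i ∈ ι ∪ {j}} (1 + α_i)) < ρ. -/

import Mathlib

open MeasureTheory Metric
open scoped NNReal ENNReal BigOperators Classical

variable {X : Type*}

/-- The weighted cardinality function `χ` (for `p` injective). -/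
noncomputable def chi {m : ℕ} (p : Fin m → X) (α : Fin m → ℝ) (q : X) : ℝ :=
  1 + ∑ j, if p j = q then α j else 0

/-- The space of formal barycenters `Σ_{ρ,α}`, as a set of (probability) measures. -/
noncomputable def BarM [MeasurableSpace X] {m : ℕ} (p : Fin m → X) (α : Fin m → ℝ)
    (ρ : ℝ) : Set (Measure X) :=
  {μ | ∃ (J : Finset X) (t : X → ℝ≥0),
    (∑ q ∈ J, t q) = 1 ∧
    4 * Real.pi * (∑ q ∈ J, chi p α q) < ρ ∧
    μ = ∑ q ∈ J, ((t q : ℝ≥0∞) • Measure.dirac q)}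

open ProbabilityTheory

/-!
A probability measure is a formal barycenter exactly when it is concentrated on some admissible
finite set, that is, a set `J` with `4π χ(J) < ρ`. Since `χ ≥ 0`, the admissible sets are closed
under taking subsets. A proper convex combination of the uniform measure on `J` with `δ_x` charges
every point of `J ∪ {x}`, so stability towards `δ_x` says that adjoining `x` to a nonempty
admissible set keeps it admissible. Finally `χ(J)` depends only on how many points of `J` lie off
the `p_i` and on the set of `i` with `p_i ∈ J`, and as `X` is infinite all such pairs `(k, ι)`
occur.
-/

section Concentration

variable [MeasurableSpace X]

/-- The probability measures concentrated on some member of a family `𝒥` of finite sets. When `𝒥`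
is an abstract simplicial complex with vertices in `X`, this is its geometric realization inside
the space of measures. -/
def probabilityMeasuresOn (𝒥 : Set (Finset X)) : Set (Measure X) :=
  {μ | IsProbabilityMeasure μ ∧ ∃ J ∈ 𝒥, ∀ᵐ q ∂μ, q ∈ J}

lemma isProbabilityMeasure_convexCombination (μ ν : Measure X) [IsProbabilityMeasure μ]
    [IsProbabilityMeasure ν] {t : ℝ} (ht₀ : 0 ≤ t) (ht₁ : t ≤ 1) :
    IsProbabilityMeasure (ENNReal.ofReal (1 - t) • μ + ENNReal.ofReal t • ν) :=
  ⟨by simp [← ENNReal.ofReal_add (sub_nonneg.2 ht₁) ht₀]⟩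

lemma isProbabilityMeasure_sum_smul_dirac_iff {J : Finset X} {t : X → ℝ≥0} :
    IsProbabilityMeasure (∑ q ∈ J, (t q : ℝ≥0∞) • Measure.dirac q) ↔ ∑ q ∈ J, t q = 1 := by
  simp only [isProbabilityMeasure_iff, Measure.finsetSum_apply, Measure.smul_apply, measure_univ,
    smul_eq_mul, mul_one]
  norm_cast

variable [MeasurableSingletonClass X]

lemma ae_mem_iff_exists_eq_sum_smul_dirac {μ : Measure X} [IsFiniteMeasure μ] {J : Finset X} :
    (∀ᵐ q ∂μ, q ∈ J) ↔ ∃ t : X → ℝ≥0, μ = ∑ q ∈ J, (t q : ℝ≥0∞) • Measure.dirac q := by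
  constructor
  · intro h
    refine ⟨fun q => (μ {q}).toNNReal, ?_⟩
    simpa only [ENNReal.coe_toNNReal (measure_ne_top μ _)] using Measure.ae_mem_finset_iff.1 h
  · rintro ⟨t, rfl⟩
    simp +contextual [ae_iff, Measure.finsetSum_apply]

lemma ae_uniformOn_mem_iff {J K : Finset X} :
    (∀ᵐ q ∂uniformOn (J : Set X), q ∈ K) ↔ J ⊆ K := by
  rw [ae_iff, uniformOn_eq_zero_iff J.finite_toSet, ← Finset.coe_subset]
  exact Set.sdiff_eq_empty

theorem probabilityMeasuresOn_stable_iff {𝒥 : Set (Finset X)} (h𝒥 : IsLowerSet 𝒥) (x : X) :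
    (∀ μ ∈ probabilityMeasuresOn 𝒥, ∀ t : ℝ, 0 ≤ t → t ≤ 1 →
      ENNReal.ofReal (1 - t) • μ + ENNReal.ofReal t • Measure.dirac x ∈
        probabilityMeasuresOn 𝒥) ↔
    ∀ J ∈ 𝒥, J.Nonempty → insert x J ∈ 𝒥 := by
  constructor
  · intro hstable J hJ hne
    have huniform : uniformOn (J : Set X) ∈ probabilityMeasuresOn 𝒥 :=
      ⟨isProbabilityMeasure_uniformOn J.finite_toSet hne, J, hJ,
        ae_uniformOn_mem_iff.2 subset_rfl⟩
    obtain ⟨-, K, hK, hmid⟩ := hstable _ huniform (1 / 2) (by norm_num) (by norm_num)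
    rw [ae_add_measure_iff, Measure.ae_ennreal_smul_measure_iff (by norm_num),
      Measure.ae_ennreal_smul_measure_iff (by norm_num), ae_uniformOn_mem_iff] at hmid
    have hx : x ∈ K := (ae_dirac_iff K.measurableSet).1 hmid.2
    exact h𝒥 (Finset.insert_subset hx hmid.1) hK
  · rintro hinsert μ ⟨hμ, J, hJ, hμJ⟩ t ht₀ ht₁
    have hne : J.Nonempty := hμJ.exists
    refine ⟨isProbabilityMeasure_convexCombination μ _ ht₀ ht₁, insert x J, hinsert J hJ hne, ?_⟩
    rw [ae_add_measure_iff]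
    constructor
    · exact Measure.ae_smul_measure (hμJ.mono fun q => Finset.mem_insert_of_mem) _
    · exact Measure.ae_smul_measure
        ((ae_dirac_iff (insert x J).measurableSet).2 (Finset.mem_insert_self x J)) _

end Concentration

section RegularPart

variable {κ : Type*} {p : κ → X}

/-- The points of `J` that are none of the `p i`. In the combinatorial condition, `J` enters
only through `k = #(regularPart p J)` and `ι = {i | p i ∈ J}`, the latter written
`J.preimage p _`. -/
noncomputable def regularPart (p : κ → X) (J : Finset X) : Finset X :=
  {q ∈ J | q ∉ Set.range p}

lemma card_eq_card_regularPart_add_card_preimage (hp : Function.Injective p) (J : Finset X) :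
    J.card = (regularPart p J).card + (J.preimage p hp.injOn).card := by
  rw [regularPart, Finset.card_preimage, add_comm, Finset.card_filter_add_card_filter_not]

lemma regularPart_insert_apply (J : Finset X) (j : κ) :
    regularPart p (insert (p j) J) = regularPart p J := by
  simp [regularPart, Finset.filter_insert]

lemma preimage_insert_apply [DecidableEq κ] (hp : Function.Injective p) (J : Finset X) (j : κ) :
    (insert (p j) J).preimage p hp.injOn = insert j (J.preimage p hp.injOn) := by
  ext i
  simp [hp.eq_iff]

lemma exists_card_regularPart_eq_and_preimage_eq [Infinite X] [Finite κ]
    (hp : Function.Injective p) (k : ℕ) (ι : Finset κ) :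
    ∃ J : Finset X, (regularPart p J).card = k ∧ J.preimage p hp.injOn = ι := by
  obtain ⟨S, hS, rfl⟩ := (Set.finite_range p).infinite_compl.exists_subset_card_eq k
  have hoff : ∀ q ∈ S, q ∉ Set.range p := fun q hq => hS hq
  refine ⟨S ∪ ι.image p, ?_, ?_⟩
  · have himage : {q ∈ ι.image p | q ∉ Set.range p} = ∅ := by simp [Finset.filter_image]
    rw [regularPart, Finset.filter_union, Finset.filter_true_of_mem hoff, himage,
      Finset.union_empty]
  · ext i
    have hi : p i ∉ S := fun h => hoff _ h ⟨i, rfl⟩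
    simp [hi, hp.eq_iff, -Finset.preimage_union]

end RegularPart

section Weights

variable {m : ℕ} {p : Fin m → X} {α : Fin m → ℝ} {ρ : ℝ}

/-- The finite sets allowed as supports of the formal barycenters in `Σ_{ρ,α}`. -/
def admissibleSupports (p : Fin m → X) (α : Fin m → ℝ) (ρ : ℝ) : Set (Finset X) :=
  {J | 4 * Real.pi * ∑ q ∈ J, chi p α q < ρ}

lemma barM_eq_probabilityMeasuresOn [MeasurableSpace X] [MeasurableSingletonClass X] :
    BarM p α ρ = probabilityMeasuresOn (admissibleSupports p α ρ) := by
  ext μ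
  constructor
  · rintro ⟨J, t, ht, hJ, rfl⟩
    have hprob := isProbabilityMeasure_sum_smul_dirac_iff.2 ht
    exact ⟨hprob, J, hJ, ae_mem_iff_exists_eq_sum_smul_dirac.2 ⟨t, rfl⟩⟩
  · rintro ⟨hprob, J, hJ, hμJ⟩
    obtain ⟨t, rfl⟩ := ae_mem_iff_exists_eq_sum_smul_dirac.1 hμJ
    exact ⟨J, t, isProbabilityMeasure_sum_smul_dirac_iff.1 hprob, hJ, rfl⟩

lemma chi_nonneg (hp : Function.Injective p) (hα : ∀ i, -1 ≤ α i) (q : X) : 0 ≤ chi p α q := by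
  by_cases hq : q ∈ Set.range p
  · obtain ⟨i, rfl⟩ := hq
    simpa [chi, hp.eq_iff, add_comm] using neg_le_iff_add_nonneg.1 (hα i)
  · have hne : ∀ i, p i ≠ q := fun i hi => hq ⟨i, hi⟩
    simp [chi, hne]

lemma isLowerSet_admissibleSupports (hχ : ∀ q, 0 ≤ chi p α q) :
    IsLowerSet (admissibleSupports p α ρ) := by
  intro K J hJK hK
  have hsum : ∑ q ∈ J, chi p α q ≤ ∑ q ∈ K, chi p α q :=
    Finset.sum_le_sum_of_subset_of_nonneg hJK fun q _ _ => hχ q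
  exact (mul_le_mul_of_nonneg_left hsum (by positivity)).trans_lt hK

lemma sum_chi (hp : Function.Injective p) (J : Finset X) :
    ∑ q ∈ J, chi p α q =
      (regularPart p J).card + ∑ i ∈ J.preimage p hp.injOn, (1 + α i) := by
  have hswap : ∑ q ∈ J, ∑ i, (if p i = q then α i else 0) = ∑ i ∈ J.preimage p hp.injOn, α i := by
    rw [Finset.sum_comm]
    simp only [Finset.sum_ite_eq, ← Finset.sum_filter]
    congr 1
    ext i
    simp
  have hcard := card_eq_card_regularPart_add_card_preimage hp J
  calc ∑ q ∈ J, chi p α q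
      = J.card + ∑ i ∈ J.preimage p hp.injOn, α i := by
        simp only [chi, Finset.sum_add_distrib, hswap, Finset.sum_const, nsmul_one]
    _ = (regularPart p J).card + ∑ i ∈ J.preimage p hp.injOn, (1 + α i) := by
        rw [hcard, Nat.cast_add, Finset.sum_add_distrib, Finset.sum_const, nsmul_one, add_assoc]

lemma mem_admissibleSupports_iff (hp : Function.Injective p) {J : Finset X} :
    J ∈ admissibleSupports p α ρ ↔
      4 * Real.pi * ((regularPart p J).card +
        ∑ i ∈ J.preimage p hp.injOn, (1 + α i)) < ρ := by
  rw [← sum_chi hp, admissibleSupports, Set.mem_ofPred_eq]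

lemma admissibleSupports_insert_iff [Infinite X] (hp : Function.Injective p) (j : Fin m) :
    (∀ J ∈ admissibleSupports p α ρ, J.Nonempty → insert (p j) J ∈ admissibleSupports p α ρ) ↔
    (∀ (k : ℕ) (ι : Finset (Fin m)), 1 ≤ k + ι.card →
      4 * Real.pi * ((k : ℝ) + ∑ i ∈ ι, (1 + α i)) < ρ →
      4 * Real.pi * ((k : ℝ) + ∑ i ∈ insert j ι, (1 + α i)) < ρ) := by
  simp only [mem_admissibleSupports_iff hp, regularPart_insert_apply, preimage_insert_apply hp]
  constructor
  · intro h k ι hpos hlt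
    obtain ⟨J, rfl, rfl⟩ := exists_card_regularPart_eq_and_preimage_eq hp k ι
    rw [← card_eq_card_regularPart_add_card_preimage hp] at hpos
    exact h J hlt (Finset.card_pos.1 hpos)
  · intro h J hlt hne
    have hpos := Finset.card_pos.2 hne
    rw [card_eq_card_regularPart_add_card_preimage hp] at hpos
    exact h _ _ hpos hlt

end Weights

theorem pj_stable_iff_general [Infinite X] [MeasurableSpace X] [MeasurableSingletonClass X]
    {m : ℕ} (p : Fin m → X) (hp : Function.Injective p) (α : Fin m → ℝ) (hα : ∀ i, -1 ≤ α i)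
    (ρ : ℝ) (j : Fin m) :
    (∀ μ ∈ BarM p α ρ, ∀ t : ℝ, 0 ≤ t → t ≤ 1 →
      (ENNReal.ofReal (1 - t) • μ + ENNReal.ofReal t • Measure.dirac (p j)) ∈ BarM p α ρ)
    ↔
    (∀ (k : ℕ) (ι : Finset (Fin m)), 1 ≤ k + ι.card →
      4 * Real.pi * ((k : ℝ) + ∑ i ∈ ι, (1 + α i)) < ρ →
      4 * Real.pi * ((k : ℝ) + ∑ i ∈ insert j ι, (1 + α i)) < ρ) := by
  have hlower := isLowerSet_admissibleSupports (ρ := ρ) (chi_nonneg hp hα)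
  rw [barM_eq_probabilityMeasuresOn, probabilityMeasuresOn_stable_iff hlower]
  exact admissibleSupports_insert_iff hp j

/-- `p_j`-stability of `Σ_{ρ,α}` (convex stability towards `δ_{p_j}`) is
equivalent to the combinatorial condition on admissible pairs `(k, ι)`. -/
theorem pj_stable_iff
    [MetricSpace X] [CompactSpace X] [Infinite X] [MeasurableSpace X] [BorelSpace X]
    {m : ℕ} (hm : 1 ≤ m) (p : Fin m → X) (hp : Function.Injective p)
    (α : Fin m → ℝ) (hα : ∀ j, -1 < α j ∧ α j < 0) (hmono : Monotone α)
    (ρ : ℝ) (hρ : 0 < ρ) (j : Fin m) :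
    (∀ μ ∈ BarM p α ρ, ∀ t : ℝ, 0 ≤ t → t ≤ 1 →
      (ENNReal.ofReal (1 - t) • μ + ENNReal.ofReal t • Measure.dirac (p j)) ∈ BarM p α ρ)
    ↔
    (∀ (k : ℕ) (ι : Finset (Fin m)), 1 ≤ k + ι.card →
      4 * Real.pi * ((k : ℝ) + ∑ i ∈ ι, (1 + α i)) < ρ →
      4 * Real.pi * ((k : ℝ) + ∑ i ∈ insert j ι, (1 + α i)) < ρ) :=
  pj_stable_iff_general p hp α (fun i => (hα i).1.le) ρ j
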